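/- Let T₁, T₂ : E → E⊥ be bounded linear operators. Then for every ξ ∈ E, the orthogonal projection of ξ + T₂ξ onto the graph W_{T₁} is P_{W_{T₁}}(ξ + T₂ξ) = η + T₁η, where η = Q_{T₁}⁻¹ (1_E + T₁* T₂) ξ. In other words, in graph coordinates the composition P_{W_{T₁}} restricted to W_{T₂} acts on E as the operator Q_{T₁}⁻¹(1_E + T₁*T₂). -/

import Mathlib

/-!
The vector `(ξ + T₂ξ) - (η + T₁η)` is orthogonal to every `ζ + T₁ζ` exactly when
`⟪ζ, ξ - η⟫ + ⟪T₁ζ, T₂ξ - T₁η⟫ = 0` for all `ζ ∈ E` (the cross terms vanish because `E ⊥ Eᗮ`).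
Moving `T₁` to the other side, this is the normal equation `(1 + T₁*T₁) η = (1 + T₁*T₂) ξ`.
It is solved by `η = Q⁻¹ (1 + T₁*T₂) ξ` because `Q = 1 + T₁*T₁` satisfies
`⟪Qx, x⟫ = ‖x‖² + ‖T₁x‖² ≥ ‖x‖²` and is therefore invertible (`isUnit_one_add_adjoint_comp_self`);
the orthogonality is `sub_mem_graphSub_orthogonal`.
-/

noncomputable section

variable {H : Type*} [NormedAddCommGroup H] [InnerProductSpace ℂ H]

/-- The graph `W_T = {ξ + Tξ : ξ ∈ E}` of a bounded operator `T : E → Eᗮ`, as a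
subspace of `H`. -/
def graphSub (E : Submodule ℂ H) (T : E →L[ℂ] Eᗮ) : Submodule ℂ H :=
  LinearMap.range (E.subtype + Eᗮ.subtype.comp T.toLinearMap)

open ContinuousLinearMap in
/-- Coercivity of `1 + T*T` makes it invertible, so `Ring.inverse` is its genuine inverse. -/
lemma isUnit_one_add_adjoint_comp_self {V W : Type*}
    [NormedAddCommGroup V] [InnerProductSpace ℂ V] [CompleteSpace V]
    [NormedAddCommGroup W] [InnerProductSpace ℂ W] [CompleteSpace W] (T : V →L[ℂ] W) :
    IsUnit ((1 : V →L[ℂ] V) + (adjoint T).comp T) := by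
  refine isUnit_of_forall_le_norm_inner_map _ (c := 1) one_pos fun x => ?_
  have h : (inner ℂ (((1 : V →L[ℂ] V) + (adjoint T).comp T) x) x : ℂ)
      = ((‖x‖ ^ 2 + ‖T x‖ ^ 2 : ℝ) : ℂ) := by
    simp [adjoint_inner_left, inner_self_eq_norm_sq_to_K]
  rw [h, Complex.norm_real, Real.norm_of_nonneg (by positivity)]
  simp

/-- The normal equation `(1 + T₁*T₁) η = (1 + T₁*T₂) ξ` implies that the difference of the graph
points over `ξ` and `η` is orthogonal to the graph of `T₁`. -/
lemma sub_mem_graphSub_orthogonal (E : Submodule ℂ H) [CompleteSpace E] [CompleteSpace ↥Eᗮ]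
    (T₁ T₂ : E →L[ℂ] Eᗮ) (ξ η : E)
    (h : ((1 : E →L[ℂ] E) + (ContinuousLinearMap.adjoint T₁).comp T₁) η
      = ((1 : E →L[ℂ] E) + (ContinuousLinearMap.adjoint T₁).comp T₂) ξ) :
    ((ξ : H) + (T₂ ξ : H)) - ((η : H) + (T₁ η : H)) ∈ (graphSub E T₁)ᗮ := by
  rw [Submodule.mem_orthogonal]
  rintro _ ⟨ζ, rfl⟩
  have hsplit : ((ξ : H) + (T₂ ξ : H)) - ((η : H) + (T₁ η : H))
      = ((ξ - η : E) : H) + ((T₂ ξ - T₁ η : Eᗮ) : H) := by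
    push_cast
    abel
  have h1 : inner ℂ (ζ : H) ((T₂ ξ - T₁ η : Eᗮ) : H) = 0 :=
    Submodule.inner_right_of_mem_orthogonal ζ.2 (T₂ ξ - T₁ η).2
  have h2 : inner ℂ ((T₁ ζ : Eᗮ) : H) ((ξ - η : E) : H) = 0 :=
    Submodule.inner_left_of_mem_orthogonal (ξ - η).2 (T₁ ζ).2
  have hadj : (ξ - η) + ContinuousLinearMap.adjoint T₁ (T₂ ξ - T₁ η) = 0 := by
    have h' : η + ContinuousLinearMap.adjoint T₁ (T₁ η)
        = ξ + ContinuousLinearMap.adjoint T₁ (T₂ ξ) := h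
    rw [map_sub, sub_add_sub_comm, h', sub_self]
  have key : inner ℂ ζ (ξ - η) + inner ℂ (T₁ ζ) (T₂ ξ - T₁ η) = 0 := by
    rw [← ContinuousLinearMap.adjoint_inner_right, ← inner_add_right, hadj, inner_zero_right]
  rw [Submodule.coe_inner, Submodule.coe_inner] at key
  change inner ℂ ((ζ : H) + ((T₁ ζ : Eᗮ) : H)) _ = 0
  rw [hsplit, inner_add_left, inner_add_right, inner_add_right, h1, h2, add_zero, zero_add, key]

/-- For every `ξ ∈ E`, the orthogonal projection of `ξ + T₂ξ` onto
the graph `W_{T₁}` is `η + T₁η` where `η = Q_{T₁}⁻¹ (1 + T₁*T₂) ξ`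
(the projection is characterized by `η + T₁η ∈ W_{T₁}` and
`(ξ + T₂ξ) − (η + T₁η) ⊥ W_{T₁}`); i.e. in graph coordinates `P_{W_{T₁}}`
restricted to `W_{T₂}` acts on `E` as `Q_{T₁}⁻¹(1 + T₁*T₂)`. -/
theorem statement7 [CompleteSpace H] (E : Submodule ℂ H)
    (hE : IsClosed (E : Set H)) [CompleteSpace E] [CompleteSpace ↥Eᗮ]
    (T₁ T₂ : E →L[ℂ] Eᗮ) :
    ∀ ξ : E,
      (((Ring.inverse ((1 : E →L[ℂ] E) + (ContinuousLinearMap.adjoint T₁).comp T₁)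
            (((1 : E →L[ℂ] E) + (ContinuousLinearMap.adjoint T₁).comp T₂) ξ) : E) : H)
          + (T₁ (Ring.inverse ((1 : E →L[ℂ] E) + (ContinuousLinearMap.adjoint T₁).comp T₁)
            (((1 : E →L[ℂ] E) + (ContinuousLinearMap.adjoint T₁).comp T₂) ξ)) : H)
          ∈ graphSub E T₁) ∧
      (((ξ : H) + (T₂ ξ : H))
          - (((Ring.inverse ((1 : E →L[ℂ] E) + (ContinuousLinearMap.adjoint T₁).comp T₁)
            (((1 : E →L[ℂ] E) + (ContinuousLinearMap.adjoint T₁).comp T₂) ξ) : E) : H)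
          + (T₁ (Ring.inverse ((1 : E →L[ℂ] E) + (ContinuousLinearMap.adjoint T₁).comp T₁)
            (((1 : E →L[ℂ] E) + (ContinuousLinearMap.adjoint T₁).comp T₂) ξ)) : H))
          ∈ (graphSub E T₁)ᗮ) := by
  intro ξ
  refine ⟨⟨_, rfl⟩, sub_mem_graphSub_orthogonal E T₁ T₂ ξ _ ?_⟩
  exact congrArg (fun A : E →L[ℂ] E =>
      A (((1 : E →L[ℂ] E) + (ContinuousLinearMap.adjoint T₁).comp T₂) ξ))
    (Ring.mul_inverse_cancel _ (isUnit_one_add_adjoint_comp_self T₁))
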